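/- Let f : {0,1}^n × {0,1}^n → {0,1} and let μ be a product distribution on {0,1}^n × {0,1}^n. Suppose there exists an integer k ≥ 20 such that ⌈100 · log srec^μ_{δ,δ}(f)⌉ ≤ k for δ = 1/(30·100·(k+1)^4). Then there exists a universal constant C > 0 (independent of f, μ, n, k) such that CC^μ_{0.49}(f) ≤ C · k². -/

import Mathlib

open scoped BigOperators
open scoped Classical

noncomputable section

/-! ## Probability distributions on finite types -/

/-- `p` is a probability distribution on the finite type `α`. -/
def IsDist {α : Type} [Fintype α] (p : α → ℝ) : Prop :=
  (∀ a, 0 ≤ p a) ∧ ∑ a, p a = 1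

/-- `μ` (in curried form) is a probability distribution on `X × Y`. -/
def IsDist2 {X Y : Type} [Fintype X] [Fintype Y] (μ : X → Y → ℝ) : Prop :=
  (∀ x y, 0 ≤ μ x y) ∧ ∑ x, ∑ y, μ x y = 1

/-! ## Deterministic communication protocols -/

/-- A deterministic two-party communication protocol: a finite binary tree where each
internal node is owned by Alice (`nodeA`) or Bob (`nodeB`) and is labeled by a function
of that player's input choosing one of the two children; leaves carry Boolean outputs. -/
inductive Protocol (X Y : Type) : Type
  | leaf : Bool → Protocol X Y
  | nodeA : (X → Bool) → Protocol X Y → Protocol X Y → Protocol X Y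
  | nodeB : (Y → Bool) → Protocol X Y → Protocol X Y → Protocol X Y

namespace Protocol

def eval {X Y : Type} : Protocol X Y → X → Y → Bool
  | leaf b, _, _ => b
  | nodeA g t0 t1, x, y => if g x then eval t1 x y else eval t0 x y
  | nodeB g t0 t1, x, y => if g y then eval t1 x y else eval t0 x y

/-- Depth (number of bits communicated in the worst case). -/
def depth {X Y : Type} : Protocol X Y → ℕ
  | leaf _ => 0
  | nodeA _ t0 t1 => max (depth t0) (depth t1) + 1
  | nodeB _ t0 t1 => max (depth t0) (depth t1) + 1

/-- Number of leaves. -/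
def leavesCount {X Y : Type} : Protocol X Y → ℕ
  | leaf _ => 1
  | nodeA _ t0 t1 => leavesCount t0 + leavesCount t1
  | nodeB _ t0 t1 => leavesCount t0 + leavesCount t1

/-- The sequence of bits communicated on input `(x, y)`. -/
def transcript {X Y : Type} : Protocol X Y → X → Y → List Bool
  | leaf _, _, _ => []
  | nodeA g t0 t1, x, y =>
      if g x then true :: transcript t1 x y else false :: transcript t0 x y
  | nodeB g t0 t1, x, y =>
      if g y then true :: transcript t1 x y else false :: transcript t0 x y

end Protocol

/-- Error of a deterministic protocol w.r.t. input distribution `μ`. -/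
def commErr {X Y : Type} [Fintype X] [Fintype Y]
    (μ : X → Y → ℝ) (f : X → Y → Bool) (P : Protocol X Y) : ℝ :=
  ∑ x, ∑ y, if P.eval x y ≠ f x y then μ x y else 0

/-- Distributional communication complexity `CC^μ_ε(f)`: the minimum depth of a
deterministic protocol erring with probability at most `ε` under `μ`. -/
def CCdist {X Y : Type} [Fintype X] [Fintype Y]
    (μ : X → Y → ℝ) (f : X → Y → Bool) (ε : ℝ) : ℕ :=
  sInf {d : ℕ | ∃ P : Protocol X Y, P.depth ≤ d ∧ commErr μ f P ≤ ε}

/-- The advantage `adv_μ(Π)` of a protocol w.r.t. a (not necessarily normalized) measure. -/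
def protAdv {X Y : Type} [Fintype X] [Fintype Y]
    (μ : X → Y → ℝ) (f : X → Y → Bool) (P : Protocol X Y) : ℝ :=
  ∑ x, ∑ y, if P.eval x y = f x y then μ x y else - μ x y

/-! ## Information complexity -/

/-- Probability of an event under a finite (possibly unnormalized) distribution. -/
def prOf {Ω : Type} [Fintype Ω] (p : Ω → ℝ) (q : Ω → Prop) : ℝ :=
  ∑ ω, if q ω then p ω else 0

/-- Conditional mutual information `I(A ; B | C)` (in bits) of random variables `A`, `B`, `C`
defined on a finite probability space `(Ω, p)`. -/
def condMI {Ω α β γ : Type} [Fintype Ω] (p : Ω → ℝ)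
    (A : Ω → α) (B : Ω → β) (C : Ω → γ) : ℝ :=
  ∑ ω, p ω * Real.logb 2 (
    (prOf p (fun ω' => A ω' = A ω ∧ B ω' = B ω ∧ C ω' = C ω) *
      prOf p (fun ω' => C ω' = C ω)) /
    (prOf p (fun ω' => A ω' = A ω ∧ C ω' = C ω) *
      prOf p (fun ω' => B ω' = B ω ∧ C ω' = C ω)))

/-- Internal information cost `IC^μ(Π) = I(X;T|Y) + I(Y;T|X)` of the public-coin protocol
given by a distribution `ρ` on `Fin m` together with deterministic protocols `P r`; the
transcript `T` consists of the public randomness together with the communicated bits. -/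
def infoCost {X Y : Type} [Fintype X] [Fintype Y] (μ : X → Y → ℝ)
    {m : ℕ} (ρ : Fin m → ℝ) (P : Fin m → Protocol X Y) : ℝ :=
  condMI (fun ω : X × Y × Fin m => μ ω.1 ω.2.1 * ρ ω.2.2)
      (fun ω => ω.1)
      (fun ω => (ω.2.2, (P ω.2.2).transcript ω.1 ω.2.1))
      (fun ω => ω.2.1)
  + condMI (fun ω : X × Y × Fin m => μ ω.1 ω.2.1 * ρ ω.2.2)
      (fun ω => ω.2.1)
      (fun ω => (ω.2.2, (P ω.2.2).transcript ω.1 ω.2.1))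
      (fun ω => ω.1)

/-- Error of a public-coin protocol under input distribution `μ` and coin distribution `ρ`. -/
def randErr {X Y : Type} [Fintype X] [Fintype Y] (μ : X → Y → ℝ) (f : X → Y → Bool)
    {m : ℕ} (ρ : Fin m → ℝ) (P : Fin m → Protocol X Y) : ℝ :=
  ∑ x, ∑ y, ∑ r, if (P r).eval x y ≠ f x y then μ x y * ρ r else 0

/-- `IC^μ_ε(f)`: infimum of the information cost over all public-coin protocols computing
`f` with error at most `ε` under `μ`. -/
def ICmu {X Y : Type} [Fintype X] [Fintype Y]
    (μ : X → Y → ℝ) (f : X → Y → Bool) (ε : ℝ) : ℝ :=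
  sInf { c : ℝ | ∃ (m : ℕ) (ρ : Fin m → ℝ) (P : Fin m → Protocol X Y),
    IsDist ρ ∧ randErr μ f ρ P ≤ ε ∧ c = infoCost μ ρ P }

/-- `IC_ε(f) = max_μ IC^μ_ε(f)`. -/
def IC {X Y : Type} [Fintype X] [Fintype Y] (f : X → Y → Bool) (ε : ℝ) : ℝ :=
  sSup { c : ℝ | ∃ μ : X → Y → ℝ, IsDist2 μ ∧ c = ICmu μ f ε }

/-! ## Rectangles, smooth rectangle bound and partition bound -/

/-- Total weight of rectangles containing `(x, y)`: a combinatorial rectangle is a pair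
`R = (S, T)` of finite sets, and `(x,y) ∈ R` iff `x ∈ S ∧ y ∈ T`. -/
def rcov {X Y : Type} [Fintype X] [Fintype Y]
    (w : Finset X × Finset Y → ℝ) (x : X) (y : Y) : ℝ :=
  ∑ R : Finset X × Finset Y, if x ∈ R.1 ∧ y ∈ R.2 then w R else 0

/-- `μ(R)` for a rectangle `R`. -/
def rMass {X Y : Type} [Fintype X] [Fintype Y]
    (μ : X → Y → ℝ) (R : Finset X × Finset Y) : ℝ :=
  ∑ x, ∑ y, if x ∈ R.1 ∧ y ∈ R.2 then μ x y else 0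

/-- `μ_z(R) = μ(R ∩ f⁻¹(z))` for a rectangle `R`. -/
def rMassZ {X Y : Type} [Fintype X] [Fintype Y]
    (μ : X → Y → ℝ) (f : X → Y → Bool) (z : Bool) (R : Finset X × Finset Y) : ℝ :=
  ∑ x, ∑ y, if (x ∈ R.1 ∧ y ∈ R.2) ∧ f x y = z then μ x y else 0

/-- `μ_z = μ(f⁻¹(z))`. -/
def totalZ {X Y : Type} [Fintype X] [Fintype Y]
    (μ : X → Y → ℝ) (f : X → Y → Bool) (z : Bool) : ℝ :=
  ∑ x, ∑ y, if f x y = z then μ x y else 0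

/-- `|μ|`, the total mass of a measure. -/
def totalMass {X Y : Type} [Fintype X] [Fintype Y] (μ : X → Y → ℝ) : ℝ :=
  ∑ x, ∑ y, μ x y

/-- Restriction of a measure to a rectangle. -/
def restrictRect {X Y : Type} (μ : X → Y → ℝ) (R : Finset X × Finset Y) : X → Y → ℝ :=
  fun x y => if x ∈ R.1 ∧ y ∈ R.2 then μ x y else 0

/-- Distributional smooth rectangle bound `srec^{z,μ}_{ε,δ}(f)` (LP optimal value). -/
def srecZmu {X Y : Type} [Fintype X] [Fintype Y]
    (μ : X → Y → ℝ) (f : X → Y → Bool) (z : Bool) (ε δ : ℝ) : ℝ :=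
  sInf { v : ℝ | ∃ w : Finset X × Finset Y → ℝ,
    (∀ R, 0 ≤ w R) ∧
    ((1 - ε) * totalZ μ f z ≤ ∑ x, ∑ y, if f x y = z then μ x y * rcov w x y else 0) ∧
    (∀ x y, f x y ≠ z → rcov w x y ≤ δ) ∧
    (∀ x y, rcov w x y ≤ 1) ∧
    v = ∑ R : Finset X × Finset Y, w R }

/-- `srec^μ_{ε,δ}(f) = max{srec^{0,μ}_{ε,δ}(f), srec^{1,μ}_{ε,δ}(f)}`. -/
def srecMu {X Y : Type} [Fintype X] [Fintype Y]
    (μ : X → Y → ℝ) (f : X → Y → Bool) (ε δ : ℝ) : ℝ :=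
  max (srecZmu μ f false ε δ) (srecZmu μ f true ε δ)

/-- Smooth rectangle bound `srec^z_{ε,δ}(f)` (LP optimal value). -/
def srecZ {X Y : Type} [Fintype X] [Fintype Y]
    (f : X → Y → Bool) (z : Bool) (ε δ : ℝ) : ℝ :=
  sInf { v : ℝ | ∃ w : Finset X × Finset Y → ℝ,
    (∀ R, 0 ≤ w R) ∧
    (∀ x y, f x y = z → 1 - ε ≤ rcov w x y) ∧
    (∀ x y, f x y ≠ z → rcov w x y ≤ δ) ∧
    (∀ x y, rcov w x y ≤ 1) ∧
    v = ∑ R : Finset X × Finset Y, w R }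

/-- `srec_{ε,δ}(f) = max{srec^0_{ε,δ}(f), srec^1_{ε,δ}(f)}`. -/
def srec {X Y : Type} [Fintype X] [Fintype Y] (f : X → Y → Bool) (ε δ : ℝ) : ℝ :=
  max (srecZ f false ε δ) (srecZ f true ε δ)

/-- Partition bound `prt_ε(f)` (LP optimal value). -/
def prt {X Y : Type} [Fintype X] [Fintype Y] (f : X → Y → Bool) (ε : ℝ) : ℝ :=
  sInf { v : ℝ | ∃ w : Bool → Finset X × Finset Y → ℝ,
    (∀ z R, 0 ≤ w z R) ∧
    (∀ x y, 1 - ε ≤ rcov (w (f x y)) x y) ∧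
    (∀ x y, rcov (w false) x y + rcov (w true) x y = 1) ∧
    v = ∑ R : Finset X × Finset Y, (w false R + w true R) }

/-! ### General-output versions -/

/-- Smooth rectangle bound `srec^z_{ε,δ}(f)` for general output alphabet. -/
def srecZgen {X Y Z : Type} [Fintype X] [Fintype Y]
    (f : X → Y → Z) (z : Z) (ε δ : ℝ) : ℝ :=
  sInf { v : ℝ | ∃ w : Finset X × Finset Y → ℝ,
    (∀ R, 0 ≤ w R) ∧
    (∀ x y, f x y = z → 1 - ε ≤ rcov w x y) ∧
    (∀ x y, f x y ≠ z → rcov w x y ≤ δ) ∧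
    (∀ x y, rcov w x y ≤ 1) ∧
    v = ∑ R : Finset X × Finset Y, w R }

/-- `srec_{ε,δ}(f) = max_{z ∈ Z} srec^z_{ε,δ}(f)`. -/
def srecGen {X Y Z : Type} [Fintype X] [Fintype Y] [Fintype Z]
    (f : X → Y → Z) (ε δ : ℝ) : ℝ :=
  sSup (Set.range fun z : Z => srecZgen f z ε δ)

/-- Distributional smooth rectangle bound for general output alphabet. -/
def srecZmuGen {X Y Z : Type} [Fintype X] [Fintype Y]
    (μ : X → Y → ℝ) (f : X → Y → Z) (z : Z) (ε δ : ℝ) : ℝ :=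
  sInf { v : ℝ | ∃ w : Finset X × Finset Y → ℝ,
    (∀ R, 0 ≤ w R) ∧
    ((1 - ε) * (∑ x, ∑ y, if f x y = z then μ x y else 0) ≤
      ∑ x, ∑ y, if f x y = z then μ x y * rcov w x y else 0) ∧
    (∀ x y, f x y ≠ z → rcov w x y ≤ δ) ∧
    (∀ x y, rcov w x y ≤ 1) ∧
    v = ∑ R : Finset X × Finset Y, w R }

/-- `srec^μ_{ε,δ}(f) = max_{z ∈ Z} srec^{z,μ}_{ε,δ}(f)`. -/
def srecMuGen {X Y Z : Type} [Fintype X] [Fintype Y] [Fintype Z]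
    (μ : X → Y → ℝ) (f : X → Y → Z) (ε δ : ℝ) : ℝ :=
  sSup (Set.range fun z : Z => srecZmuGen μ f z ε δ)

/-- Partition bound for general output alphabet. -/
def prtGen {X Y Z : Type} [Fintype X] [Fintype Y] [Fintype Z]
    (f : X → Y → Z) (ε : ℝ) : ℝ :=
  sInf { v : ℝ | ∃ w : Z → Finset X × Finset Y → ℝ,
    (∀ z R, 0 ≤ w z R) ∧
    (∀ x y, 1 - ε ≤ rcov (w (f x y)) x y) ∧
    (∀ x y, (∑ z : Z, rcov (w z) x y) = 1) ∧
    v = ∑ z : Z, ∑ R : Finset X × Finset Y, w z R }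

/-! ## Decision trees, subcubes and the query partition bound -/

/-- Deterministic decision trees on `n` input bits. -/
inductive DTree (n : ℕ) : Type
  | leaf : Bool → DTree n
  | node : Fin n → DTree n → DTree n → DTree n

def DTree.eval {n : ℕ} : DTree n → (Fin n → Bool) → Bool
  | .leaf b, _ => b
  | .node i t0 t1, x => if x i then DTree.eval t1 x else DTree.eval t0 x

def DTree.depth {n : ℕ} : DTree n → ℕ
  | .leaf _ => 0
  | .node _ t0 t1 => max (DTree.depth t0) (DTree.depth t1) + 1

/-- Error of a decision tree w.r.t. the input distribution `μ`. -/
def qErr {n : ℕ} (μ : (Fin n → Bool) → ℝ) (g : (Fin n → Bool) → Bool) (T : DTree n) : ℝ :=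
  ∑ x, if T.eval x ≠ g x then μ x else 0

/-- Distributional query complexity `QC^μ_ε(g)`: minimum depth of a deterministic decision
tree erring with probability at most `ε` under `μ`. -/
def QCdist {n : ℕ} (μ : (Fin n → Bool) → ℝ) (g : (Fin n → Bool) → Bool) (ε : ℝ) : ℕ :=
  sInf {d : ℕ | ∃ T : DTree n, T.depth ≤ d ∧ qErr μ g T ≤ ε}

/-- A subcube of `{0,1}ⁿ`, given by its support pattern `s ∈ {0,1,⋆}ⁿ`. -/
abbrev Subcube (n : ℕ) := Fin n → Option Bool

/-- Membership in a subcube. -/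
def memCube {n : ℕ} (A : Subcube n) (x : Fin n → Bool) : Prop :=
  ∀ i, ∀ b, A i = some b → x i = b

/-- Size of (the support of) a subcube. -/
def cubeSize {n : ℕ} (A : Subcube n) : ℕ :=
  (Finset.univ.filter fun i => (A i).isSome).card

/-- Total weight of subcubes containing `x`. -/
def cubeCov {n : ℕ} (w : Subcube n → ℝ) (x : Fin n → Bool) : ℝ :=
  ∑ A : Subcube n, if memCube A x then w A else 0

/-- Query partition bound `qprt_ε(g)` (LP optimal value). -/
def qprt {n : ℕ} (g : (Fin n → Bool) → Bool) (ε : ℝ) : ℝ :=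
  sInf { v : ℝ | ∃ w : Bool → Subcube n → ℝ,
    (∀ z A, 0 ≤ w z A) ∧
    (∀ x, 1 - ε ≤ cubeCov (w (g x)) x) ∧
    (∀ x, cubeCov (w false) x + cubeCov (w true) x = 1) ∧
    v = ∑ A : Subcube n, (w false A + w true A) * 2 ^ cubeSize A }

/-- The bit-wise product distribution on `{0,1}ⁿ` with `p_i(1) = p i`, `p_i(0) = 1 - p i`. -/
def bitProd {n : ℕ} (p : Fin n → ℝ) : (Fin n → Bool) → ℝ :=
  fun x => ∏ i, if x i then p i else 1 - p i

/-- `μ(A)` for a subcube (or any set given by a membership predicate). -/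
def cubeMass {n : ℕ} (μ : (Fin n → Bool) → ℝ) (A : Subcube n) : ℝ :=
  ∑ x, if memCube A x then μ x else 0

/-- `μ_z(A) = μ(A ∩ g⁻¹(z))` for a subcube `A`. -/
def cubeMassZ {n : ℕ} (μ : (Fin n → Bool) → ℝ) (g : (Fin n → Bool) → Bool)
    (z : Bool) (A : Subcube n) : ℝ :=
  ∑ x, if memCube A x ∧ g x = z then μ x else 0

/-- `μ_z = μ(g⁻¹(z))`. -/
def qTotalZ {n : ℕ} (μ : (Fin n → Bool) → ℝ) (g : (Fin n → Bool) → Bool) (z : Bool) : ℝ :=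
  ∑ x, if g x = z then μ x else 0

/-- Mass of a finite set of pairs under the product measure `μA ⊗ μB`. -/
def pairMass {X Y : Type} (μA : X → ℝ) (μB : Y → ℝ) (A : Finset (X × Y)) : ℝ :=
  ∑ q ∈ A, μA q.1 * μB q.2

end

noncomputable section

/-! ## Sums over rectangles -/

/-- The integral of `g` over the rectangle `S × T`. -/
def rectSum {X Y : Type} (g : X → Y → ℝ) (S : Finset X) (T : Finset Y) : ℝ :=
  ∑ x ∈ S, ∑ y ∈ T, g x y

section RectSum

variable {X Y : Type}

theorem rectSum_nonneg {g : X → Y → ℝ} (hg : ∀ x y, 0 ≤ g x y) (S : Finset X) (T : Finset Y) :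
    0 ≤ rectSum g S T :=
  Finset.sum_nonneg fun x _ => Finset.sum_nonneg fun y _ => hg x y

theorem rectSum_le_rectSum {g h : X → Y → ℝ} {S : Finset X} {T : Finset Y}
    (hgh : ∀ x ∈ S, ∀ y ∈ T, g x y ≤ h x y) : rectSum g S T ≤ rectSum h S T :=
  Finset.sum_le_sum fun x hx => Finset.sum_le_sum fun y hy => hgh x hx y hy

theorem rectSum_congr {g h : X → Y → ℝ} {S : Finset X} {T : Finset Y}
    (hgh : ∀ x ∈ S, ∀ y ∈ T, g x y = h x y) : rectSum g S T = rectSum h S T :=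
  Finset.sum_congr rfl fun x hx => Finset.sum_congr rfl fun y hy => hgh x hx y hy

theorem rectSum_add (g h : X → Y → ℝ) (S : Finset X) (T : Finset Y) :
    rectSum (fun x y => g x y + h x y) S T = rectSum g S T + rectSum h S T := by
  simp [rectSum, Finset.sum_add_distrib]

theorem rectSum_sub (g h : X → Y → ℝ) (S : Finset X) (T : Finset Y) :
    rectSum (fun x y => g x y - h x y) S T = rectSum g S T - rectSum h S T := by
  simp [rectSum, Finset.sum_sub_distrib]

theorem rectSum_const_mul (a : ℝ) (g : X → Y → ℝ) (S : Finset X) (T : Finset Y) :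
    rectSum (fun x y => a * g x y) S T = a * rectSum g S T := by
  simp [rectSum, Finset.mul_sum]

theorem rectSum_split_left (g : X → Y → ℝ) {C S : Finset X} (h : C ⊆ S) (T : Finset Y) :
    rectSum g S T = rectSum g C T + rectSum g (S \ C) T := by
  rw [add_comm]; exact (Finset.sum_sdiff h).symm

theorem rectSum_split_right (g : X → Y → ℝ) (S : Finset X) {D T : Finset Y} (h : D ⊆ T) :
    rectSum g S T = rectSum g S D + rectSum g S (T \ D) := by
  simp only [rectSum, ← Finset.sum_add_distrib]
  refine Finset.sum_congr rfl fun x _ => ?_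
  rw [add_comm]; exact (Finset.sum_sdiff h).symm

theorem rectSum_mul (α : X → ℝ) (β : Y → ℝ) (S : Finset X) (T : Finset Y) :
    rectSum (fun x y => α x * β y) S T = (∑ x ∈ S, α x) * ∑ y ∈ T, β y := by
  simp [rectSum, Finset.sum_mul_sum]

theorem rectSum_mono {μ : X → Y → ℝ} (hμ : ∀ x y, 0 ≤ μ x y) {S S' : Finset X}
    {T T' : Finset Y} (hS : S' ⊆ S) (hT : T' ⊆ T) : rectSum μ S' T' ≤ rectSum μ S T := by
  have h1 := rectSum_split_left μ hS T
  have h2 := rectSum_split_right μ S' hT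
  have h3 := rectSum_nonneg hμ (S \ S') T
  have h4 := rectSum_nonneg hμ S' (T \ T')
  linarith

/-- Integrating a weighted combination of indicators of rectangles. -/
theorem rectSum_mul_rcov [Fintype X] [Fintype Y] (g : X → Y → ℝ) (w : Finset X × Finset Y → ℝ)
    (S : Finset X) (T : Finset Y) :
    rectSum (fun x y => g x y * rcov w x y) S T
      = ∑ R : Finset X × Finset Y, w R * rectSum g (R.1 ∩ S) (R.2 ∩ T) := by
  have h : ∀ R : Finset X × Finset Y, w R * rectSum g (R.1 ∩ S) (R.2 ∩ T)
      = ∑ x ∈ S, ∑ y ∈ T, g x y * (if x ∈ R.1 ∧ y ∈ R.2 then w R else 0) := by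
    intro R
    rw [Finset.inter_comm, Finset.inter_comm R.2, rectSum, Finset.mul_sum,
      ← Finset.filter_mem_eq_inter, ← Finset.filter_mem_eq_inter, Finset.sum_filter]
    refine Finset.sum_congr rfl fun x _ => ?_
    split_ifs with hx
    · rw [Finset.mul_sum, Finset.sum_filter]
      refine Finset.sum_congr rfl fun y _ => ?_
      by_cases hy : y ∈ R.2 <;> simp [hx, hy, mul_comm]
    · simp [hx]
  rw [Finset.sum_congr rfl fun R _ => h R, Finset.sum_comm]
  simp only [rectSum, rcov, Finset.mul_sum]
  refine Finset.sum_congr rfl fun x _ => ?_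
  rw [Finset.sum_comm]

end RectSum

/-! ## Protocols -/

section Protocols

variable {X Y : Type}

/-- The pointwise error of a Boolean-valued function `h` in computing `f`. -/
def errFun (μ : X → Y → ℝ) (f h : X → Y → Bool) (x : X) (y : Y) : ℝ :=
  if h x y ≠ f x y then μ x y else 0

theorem errFun_le {μ : X → Y → ℝ} (hμ : ∀ x y, 0 ≤ μ x y) (f h : X → Y → Bool) (x : X) (y : Y) :
    errFun μ f h x y ≤ μ x y := by
  unfold errFun; split_ifs
  · exact le_rfl
  · exact hμ x y

/-- Alice can announce an `m`-bit message at the cost of `m` bits. -/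
theorem exists_protocol_sendA (m d : ℕ) : ∀ (g : X → ℕ) (P : ℕ → Protocol X Y),
    (∀ x, g x < 2 ^ m) → (∀ i, (P i).depth ≤ d) →
    ∃ Q : Protocol X Y, Q.depth ≤ m + d ∧ ∀ x y, Q.eval x y = (P (g x)).eval x y := by
  induction m with
  | zero =>
    intro g P hg hP
    refine ⟨P 0, by simpa using hP 0, fun x y => ?_⟩
    have := hg x
    rw [show g x = 0 by simpa using this]
  | succ m ih =>
    intro g P hg hP
    have hg' : ∀ x, g x / 2 < 2 ^ m := fun x => by
      have := hg x; rw [pow_succ] at this; omega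
    obtain ⟨Q0, h0, e0⟩ := ih (fun x => g x / 2) (fun i => P (2 * i)) hg' fun i => hP _
    obtain ⟨Q1, h1, e1⟩ := ih (fun x => g x / 2) (fun i => P (2 * i + 1)) hg' fun i => hP _
    refine ⟨.nodeA (fun x => decide (g x % 2 = 1)) Q0 Q1, ?_, fun x y => ?_⟩
    · simp only [Protocol.depth]; omega
    · by_cases hx : g x % 2 = 1
      · simp only [Protocol.eval, hx, decide_true, if_true, e1]
        rw [show 2 * (g x / 2) + 1 = g x by omega]
      · simp only [Protocol.eval, hx, decide_false, Bool.false_eq_true, if_false, e0]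
        rw [show 2 * (g x / 2) = g x by omega]

/-- Bob can announce an `m`-bit message at the cost of `m` bits. -/
theorem exists_protocol_sendB (m d : ℕ) : ∀ (g : Y → ℕ) (P : ℕ → Protocol X Y),
    (∀ y, g y < 2 ^ m) → (∀ i, (P i).depth ≤ d) →
    ∃ Q : Protocol X Y, Q.depth ≤ m + d ∧ ∀ x y, Q.eval x y = (P (g y)).eval x y := by
  induction m with
  | zero =>
    intro g P hg hP
    refine ⟨P 0, by simpa using hP 0, fun x y => ?_⟩
    have := hg y
    rw [show g y = 0 by simpa using this]
  | succ m ih =>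
    intro g P hg hP
    have hg' : ∀ y, g y / 2 < 2 ^ m := fun y => by
      have := hg y; rw [pow_succ] at this; omega
    obtain ⟨Q0, h0, e0⟩ := ih (fun y => g y / 2) (fun i => P (2 * i)) hg' fun i => hP _
    obtain ⟨Q1, h1, e1⟩ := ih (fun y => g y / 2) (fun i => P (2 * i + 1)) hg' fun i => hP _
    refine ⟨.nodeB (fun y => decide (g y % 2 = 1)) Q0 Q1, ?_, fun x y => ?_⟩
    · simp only [Protocol.depth]; omega
    · by_cases hy : g y % 2 = 1
      · simp only [Protocol.eval, hy, decide_true, if_true, e1]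
        rw [show 2 * (g y / 2) + 1 = g y by omega]
      · simp only [Protocol.eval, hy, decide_false, Bool.false_eq_true, if_false, e0]
        rw [show 2 * (g y / 2) = g y by omega]

/-- Alice and Bob can jump to the earlier of two privately known indices. -/
theorem exists_protocol_min (m d : ℕ) (gA : X → ℕ) (gB : Y → ℕ) (P : ℕ → Protocol X Y)
    (hA : ∀ x, gA x < 2 ^ m) (hB : ∀ y, gB y < 2 ^ m) (hP : ∀ i, (P i).depth ≤ d) :
    ∃ Q : Protocol X Y, Q.depth ≤ d + 2 * m ∧
      ∀ x y, Q.eval x y = (P (min (gA x) (gB y))).eval x y := by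
  choose Q hQ eQ using fun a =>
    exists_protocol_sendB m d gB (fun b => P (min a b)) hB fun b => hP _
  obtain ⟨R, hR, eR⟩ := exists_protocol_sendA m (m + d) gA Q hA hQ
  exact ⟨R, by omega, fun x y => by rw [eR, eQ]⟩

/-- `(S, T)` is split by a row or column cut with a piece of relative mass at least `q`, such that
the potential `Φ` drops by at least `c` times the mass of that piece. -/
def HasGoodCut (μ : X → Y → ℝ) (Φ : Finset X → Finset Y → ℝ) (c q : ℝ)
    (S : Finset X) (T : Finset Y) : Prop :=
  (∃ C ⊆ S, q * rectSum μ S T ≤ rectSum μ C T ∧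
      Φ C T + Φ (S \ C) T + c * rectSum μ C T ≤ Φ S T) ∨
  (∃ D ⊆ T, q * rectSum μ S T ≤ rectSum μ S D ∧
      Φ S D + Φ S (T \ D) + c * rectSum μ S D ≤ Φ S T)

/-- One round of the protocol: up to `N` successive cuts, followed by a protocol for the piece that
was cut off. Indices `gA`, `gB` record the first cut that removes `x`, `y` respectively. -/
theorem exists_cut_sequence {μ e : X → Y → ℝ} {f : X → Y → Bool} {Φ : Finset X → Finset Y → ℝ}
    {c q B L : ℝ} {d : ℕ} (hμ : ∀ x y, 0 ≤ μ x y) (he : ∀ x y, 0 ≤ e x y)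
    (hΦ : ∀ S T, 0 ≤ Φ S T) (hB : 0 ≤ B) (hL : 0 ≤ L)
    (hcut : ∀ S T, (∃ b, rectSum (errFun μ f fun _ _ => b) S T ≤ rectSum e S T) ∨
      HasGoodCut μ Φ c q S T)
    (hround : ∀ S T, ∃ (P : Protocol X Y) (U : ℝ), P.depth ≤ d ∧ 0 ≤ U ∧ U ≤ rectSum μ S T ∧
      L * U ≤ Φ S T + B * rectSum μ S T + c * rectSum μ S T ∧
      rectSum (errFun μ f P.eval) S T ≤ rectSum e S T + U) (hq : q ≤ 1) (N : ℕ) :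
    ∀ S T, ∃ (gA : X → ℕ) (gB : Y → ℕ) (P : ℕ → Protocol X Y) (U : ℝ),
      (∀ x, gA x ≤ N) ∧ (∀ y, gB y ≤ N) ∧ (∀ i, (P i).depth ≤ d) ∧
      0 ≤ U ∧ U ≤ rectSum μ S T ∧
      L * U ≤ Φ S T + B * rectSum μ S T + L * ((1 - q) ^ N * rectSum μ S T) ∧
      rectSum (errFun μ f fun x y => (P (min (gA x) (gB y))).eval x y) S T
        ≤ rectSum e S T + U := by
  have leaf_depth : ∀ b, (Protocol.leaf b : Protocol X Y).depth ≤ d := fun b => Nat.zero_le d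
  induction N with
  | zero =>
    intro S T
    have hM := rectSum_nonneg hμ S T
    have hE := rectSum_nonneg he S T
    refine ⟨fun _ => 0, fun _ => 0, fun _ => .leaf true, rectSum μ S T, by simp, by simp,
      fun _ => leaf_depth _, hM, le_rfl, ?_, ?_⟩
    · have := hΦ S T
      have := mul_nonneg hB hM
      simp only [pow_zero, one_mul]; linarith
    · have := rectSum_le_rectSum (S := S) (T := T) fun x _ y _ =>
        errFun_le hμ f (fun x y => (Protocol.leaf true : Protocol X Y).eval x y) x y
      linarith
  | succ N ih =>
    intro S T
    have hM := rectSum_nonneg hμ S T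
    have hq0 : 0 ≤ (1 - q) ^ N := pow_nonneg (by linarith) N
    rcases hcut S T with ⟨b, hb⟩ | ⟨C, hC, hqC, hΦC⟩ | ⟨D, hD, hqD, hΦD⟩
    · refine ⟨fun _ => 0, fun _ => 0, fun _ => .leaf b, 0, by simp, by simp,
        fun _ => leaf_depth _, le_rfl, hM, ?_, ?_⟩
      · have := hΦ S T
        have := mul_nonneg hB hM
        have : 0 ≤ (1 - q) ^ (N + 1) := pow_nonneg (by linarith) _
        have := mul_nonneg hL (mul_nonneg this hM)
        linarith
      · simpa [Protocol.eval] using hb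
    · obtain ⟨P₀, U₀, hd₀, hU₀, hUM₀, hL₀, hE₀⟩ := hround C T
      obtain ⟨gA, gB, P, U, hgA, hgB, hd, hU, hUM, hL', hE⟩ := ih (S \ C) T
      have hs := fun g : X → Y → ℝ => rectSum_split_left g hC T
      refine ⟨fun x => if x ∈ C then 0 else gA x + 1, fun y => gB y + 1,
        fun i => Nat.casesOn i P₀ P, U₀ + U, ?_, ?_, ?_, by linarith, ?_, ?_, ?_⟩
      · intro x; have := hgA x; dsimp only; split_ifs <;> omega
      · intro y; have := hgB y; dsimp only; omega
      · rintro (_ | i)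
        exacts [hd₀, hd i]
      · rw [hs]; linarith
      · have h1 : rectSum μ (S \ C) T ≤ (1 - q) * rectSum μ S T := by
          have := hs μ; linarith
        have h2 := mul_le_mul_of_nonneg_left (mul_le_mul_of_nonneg_left h1 hq0) hL
        have h3 : B * rectSum μ S T = B * rectSum μ C T + B * rectSum μ (S \ C) T := by
          rw [hs μ]; ring
        rw [pow_succ]
        nlinarith
      · rw [hs, hs e]
        have a1 : rectSum (errFun μ f fun x y => (Nat.casesOn (motive := fun _ => Protocol X Y)
            (min (if x ∈ C then 0 else gA x + 1) (gB y + 1)) P₀ P).eval x y) C T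
            = rectSum (errFun μ f P₀.eval) C T :=
          rectSum_congr fun x hx y _ => by simp [errFun, hx]
        have a2 : rectSum (errFun μ f fun x y => (Nat.casesOn (motive := fun _ => Protocol X Y)
            (min (if x ∈ C then 0 else gA x + 1) (gB y + 1)) P₀ P).eval x y) (S \ C) T
            = rectSum (errFun μ f fun x y => (P (min (gA x) (gB y))).eval x y) (S \ C) T :=
          rectSum_congr fun x hx y _ => by
            simp [errFun, (Finset.mem_sdiff.1 hx).2]
        rw [a1, a2]; linarith
    · obtain ⟨P₀, U₀, hd₀, hU₀, hUM₀, hL₀, hE₀⟩ := hround S D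
      obtain ⟨gA, gB, P, U, hgA, hgB, hd, hU, hUM, hL', hE⟩ := ih S (T \ D)
      have hs := fun g : X → Y → ℝ => rectSum_split_right g S hD
      refine ⟨fun x => gA x + 1, fun y => if y ∈ D then 0 else gB y + 1,
        fun i => Nat.casesOn i P₀ P, U₀ + U, ?_, ?_, ?_, by linarith, ?_, ?_, ?_⟩
      · intro x; have := hgA x; dsimp only; omega
      · intro y; have := hgB y; dsimp only; split_ifs <;> omega
      · rintro (_ | i)
        exacts [hd₀, hd i]
      · rw [hs]; linarith
      · have h1 : rectSum μ S (T \ D) ≤ (1 - q) * rectSum μ S T := by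
          have := hs μ; linarith
        have h2 := mul_le_mul_of_nonneg_left (mul_le_mul_of_nonneg_left h1 hq0) hL
        have h3 : B * rectSum μ S T = B * rectSum μ S D + B * rectSum μ S (T \ D) := by
          rw [hs μ]; ring
        rw [pow_succ]
        nlinarith
      · rw [hs, hs e]
        have a1 : rectSum (errFun μ f fun x y => (Nat.casesOn (motive := fun _ => Protocol X Y)
            (min (gA x + 1) (if y ∈ D then 0 else gB y + 1)) P₀ P).eval x y) S D
            = rectSum (errFun μ f P₀.eval) S D :=
          rectSum_congr fun x _ y hy => by simp [errFun, hy]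
        have a2 : rectSum (errFun μ f fun x y => (Nat.casesOn (motive := fun _ => Protocol X Y)
            (min (gA x + 1) (if y ∈ D then 0 else gB y + 1)) P₀ P).eval x y) S (T \ D)
            = rectSum (errFun μ f fun x y => (P (min (gA x) (gB y))).eval x y) S (T \ D) :=
          rectSum_congr fun x _ y hy => by
            simp [errFun, (Finset.mem_sdiff.1 hy).2]
        rw [a1, a2]; linarith

/-- If every rectangle is either easy or has a good cut, then `K` rounds of cutting give a protocol
whose error exceeds that of the easy rectangles by at most `U`. -/
theorem exists_protocol_of_goodCut {μ e : X → Y → ℝ} {f : X → Y → Bool}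
    {Φ : Finset X → Finset Y → ℝ} {c q : ℝ} (hμ : ∀ x y, 0 ≤ μ x y) (he : ∀ x y, 0 ≤ e x y)
    (hΦ : ∀ S T, 0 ≤ Φ S T) (hc : 0 ≤ c) (hq : q ≤ 1)
    (hcut : ∀ S T, (∃ b, rectSum (errFun μ f fun _ _ => b) S T ≤ rectSum e S T) ∨
      HasGoodCut μ Φ c q S T)
    {N m : ℕ} (hN : N < 2 ^ m) (K : ℕ) :
    ∀ S T, ∃ (P : Protocol X Y) (U : ℝ), P.depth ≤ K * (2 * m) ∧ 0 ≤ U ∧ U ≤ rectSum μ S T ∧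
      c * K * U ≤ Φ S T + c * K ^ 2 * (1 - q) ^ N * rectSum μ S T ∧
      rectSum (errFun μ f P.eval) S T ≤ rectSum e S T + U := by
  have hq0 : 0 ≤ (1 - q) ^ N := pow_nonneg (by linarith) N
  induction K with
  | zero =>
    intro S T
    have hE := rectSum_nonneg he S T
    refine ⟨.leaf true, rectSum μ S T, by simp [Protocol.depth], rectSum_nonneg hμ S T, le_rfl,
      by simpa using hΦ S T, ?_⟩
    have := rectSum_le_rectSum (S := S) (T := T) fun x _ y _ =>
      errFun_le hμ f (fun x y => (Protocol.leaf true : Protocol X Y).eval x y) x y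
    linarith
  | succ K ih =>
    intro S T
    have hK : (0 : ℝ) ≤ K := Nat.cast_nonneg K
    have hM := rectSum_nonneg hμ S T
    have hB : 0 ≤ c * (K : ℝ) ^ 2 * (1 - q) ^ N := by positivity
    have hL : 0 ≤ c * ((K : ℝ) + 1) := by positivity
    obtain ⟨gA, gB, P, U, hgA, hgB, hd, hU, hUM, hLU, hE⟩ :=
      exists_cut_sequence (f := f) (L := c * ((K : ℝ) + 1)) hμ he hΦ hB hL hcut (fun S T => by
        obtain ⟨P, U, hd, hU, hUM, hKU, hE⟩ := ih S T
        refine ⟨P, U, hd, hU, hUM, ?_, hE⟩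
        have := mul_le_mul_of_nonneg_left hUM hc
        linarith) hq N S T
    obtain ⟨Q, hQ, eQ⟩ := exists_protocol_min m _ gA gB P
      (fun x => (hgA x).trans_lt hN) (fun y => (hgB y).trans_lt hN) hd
    refine ⟨Q, U, by rw [add_mul]; omega, hU, hUM, ?_, ?_⟩
    · push_cast
      have h1 : 0 ≤ c * K * ((1 - q) ^ N * rectSum μ S T) := by positivity
      nlinarith
    · rwa [show Q.eval = fun x y => (P (min (gA x) (gB y))).eval x y from
        funext fun x => funext fun y => eQ x y]

end Protocols

/-! ## The entropy potential -/

theorem mul_log_div_le_tangent {m M m₀ M₀ : ℝ} (hm : 0 ≤ m) (hM : 0 ≤ M) (h : M = 0 → m = 0)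
    (hm₀ : 0 < m₀) (hM₀ : 0 < M₀) :
    m * Real.log (M / m) ≤ m * Real.log (M₀ / m₀) + (M * m₀ / M₀ - m) := by
  rcases hm.eq_or_lt with rfl | hm
  · simp only [zero_mul, zero_add, sub_zero]; positivity
  have hM : 0 < M := hM.lt_of_ne fun h0 => hm.ne' (h h0.symm)
  have h1 : Real.log (M / m) = Real.log (M₀ / m₀) + Real.log (M * m₀ / (M₀ * m)) := by
    rw [← Real.log_mul (by positivity) (by positivity)]
    congr 1; field_simp
  have h2 := Real.log_le_sub_one_of_pos (show 0 < M * m₀ / (M₀ * m) by positivity)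
  have h3 := mul_le_mul_of_nonneg_left h2 hm.le
  have h4 : m * (M * m₀ / (M₀ * m) - 1) = M * m₀ / M₀ - m := by field_simp
  rw [h1, mul_add]; linarith

theorem mul_log_div_le_tangent_of_two_mul_le {m M m₀ M₀ : ℝ} (hm : 0 ≤ m) (hM : 0 ≤ M)
    (h : M = 0 → m = 0) (hm₀ : 0 < m₀) (hM₀ : 0 < M₀) (h2 : 2 * m * M₀ ≤ M * m₀) :
    m * Real.log (M / m) + M * m₀ / (10 * M₀)
      ≤ m * Real.log (M₀ / m₀) + (M * m₀ / M₀ - m) := by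
  have h1 := mul_log_div_le_tangent hm hM h (half_pos hm₀) hM₀
  have h3 : Real.log (M₀ / (m₀ / 2)) = Real.log 2 + Real.log (M₀ / m₀) := by
    rw [← Real.log_mul (by norm_num) (by positivity)]
    congr 1; field_simp
  have h4 : 2 * m ≤ M * m₀ / M₀ := by rwa [le_div_iff₀ hM₀]
  have h5 : M * (m₀ / 2) / M₀ = M * m₀ / M₀ / 2 := by ring
  have h6 : M * m₀ / (10 * M₀) = M * m₀ / M₀ / 10 := by field_simp
  have h7 := mul_le_mul_of_nonneg_left Real.log_two_lt_d9.le hm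
  rw [h3, h5, mul_add] at h1
  rw [h6]
  linarith

/-- A quantitative two-term log-sum inequality. -/
theorem mul_log_div_add_le {m₁ m₂ M₁ M₂ : ℝ} (hm₁ : 0 ≤ m₁) (hm₂ : 0 ≤ m₂) (h₁ : m₁ ≤ M₁)
    (h₂ : m₂ ≤ M₂) :
    m₁ * Real.log (M₁ / m₁) + m₂ * Real.log (M₂ / m₂) +
      (if 2 * m₁ * (M₁ + M₂) ≤ M₁ * (m₁ + m₂) then
        M₁ * (m₁ + m₂) / (10 * (M₁ + M₂)) else 0)
      ≤ (m₁ + m₂) * Real.log ((M₁ + M₂) / (m₁ + m₂)) := by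
  rcases (add_nonneg hm₁ hm₂).eq_or_lt with h0 | hm
  · have : m₁ = 0 := by linarith
    have : m₂ = 0 := by linarith
    subst_vars; simp
  have hM : 0 < M₁ + M₂ := by linarith
  have t₂ := mul_log_div_le_tangent hm₂ (hm₂.trans h₂) (fun h => by linarith) hm hM
  have hs : M₁ * (m₁ + m₂) / (M₁ + M₂) + M₂ * (m₁ + m₂) / (M₁ + M₂) = m₁ + m₂ := by
    field_simp
  rw [add_mul m₁ m₂ (Real.log _)]
  split_ifs with h
  · have t₁ := mul_log_div_le_tangent_of_two_mul_le hm₁ (hm₁.trans h₁) (fun h => by linarith)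
      hm hM h
    linarith
  · have t₁ := mul_log_div_le_tangent hm₁ (hm₁.trans h₁) (fun h => by linarith) hm hM
    linarith

section Potential

variable {X Y : Type} [Fintype X] [Fintype Y]

/-- The (unnormalized) entropy potential of the rectangle `S × T` for the rectangle weights `u`. -/
def rectPotential (μ : X → Y → ℝ) (u : Finset X × Finset Y → ℝ)
    (S : Finset X) (T : Finset Y) : ℝ :=
  ∑ R, u R * (rectSum μ (R.1 ∩ S) (R.2 ∩ T) *
    Real.log (rectSum μ S T / rectSum μ (R.1 ∩ S) (R.2 ∩ T)))

theorem rectPotential_nonneg {μ : X → Y → ℝ} (hμ : ∀ x y, 0 ≤ μ x y)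
    {u : Finset X × Finset Y → ℝ} (hu : ∀ R, 0 ≤ u R) (S : Finset X) (T : Finset Y) :
    0 ≤ rectPotential μ u S T := by
  refine Finset.sum_nonneg fun R _ => mul_nonneg (hu R) ?_
  have h0 := rectSum_nonneg hμ (R.1 ∩ S) (R.2 ∩ T)
  have h1 := rectSum_mono hμ (Finset.inter_subset_right (s₁ := R.1) (s₂ := S))
    (Finset.inter_subset_right (s₁ := R.2) (s₂ := T))
  rcases h0.eq_or_lt with h | h
  · rw [← h]; simp
  · exact mul_nonneg h0 (Real.log_nonneg ((one_le_div h).2 h1))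

theorem rectPotential_split_left {μ : X → Y → ℝ} (hμ : ∀ x y, 0 ≤ μ x y)
    {u : Finset X × Finset Y → ℝ} (hu : ∀ R, 0 ≤ u R) {C S : Finset X} (hC : C ⊆ S)
    (T : Finset Y) :
    rectPotential μ u C T + rectPotential μ u (S \ C) T +
      (∑ R, if 2 * rectSum μ (R.1 ∩ C) (R.2 ∩ T) * rectSum μ S T
          ≤ rectSum μ C T * rectSum μ (R.1 ∩ S) (R.2 ∩ T)
        then u R * (rectSum μ C T * rectSum μ (R.1 ∩ S) (R.2 ∩ T) / (10 * rectSum μ S T))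
        else 0)
      ≤ rectPotential μ u S T := by
  simp only [rectPotential, ← Finset.sum_add_distrib]
  refine Finset.sum_le_sum fun R _ => ?_
  have hR : rectSum μ (R.1 ∩ S) (R.2 ∩ T)
      = rectSum μ (R.1 ∩ C) (R.2 ∩ T) + rectSum μ (R.1 ∩ (S \ C)) (R.2 ∩ T) := by
    rw [rectSum_split_left μ (Finset.inter_subset_inter_left hC) (R.2 ∩ T),
      show (R.1 ∩ S) \ (R.1 ∩ C) = R.1 ∩ (S \ C) by grind]
  have hM := rectSum_split_left μ hC T
  have h := mul_le_mul_of_nonneg_left (mul_log_div_add_le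
    (rectSum_nonneg hμ (R.1 ∩ C) (R.2 ∩ T)) (rectSum_nonneg hμ (R.1 ∩ (S \ C)) (R.2 ∩ T))
    (rectSum_mono hμ Finset.inter_subset_right Finset.inter_subset_right :
      _ ≤ rectSum μ C T)
    (rectSum_mono hμ Finset.inter_subset_right Finset.inter_subset_right :
      _ ≤ rectSum μ (S \ C) T)) (hu R)
  rw [← hR, ← hM] at h
  simpa only [mul_add, mul_ite, mul_zero] using h

theorem rectPotential_split_right {μ : X → Y → ℝ} (hμ : ∀ x y, 0 ≤ μ x y)
    {u : Finset X × Finset Y → ℝ} (hu : ∀ R, 0 ≤ u R) (S : Finset X) {D T : Finset Y}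
    (hD : D ⊆ T) :
    rectPotential μ u S D + rectPotential μ u S (T \ D) +
      (∑ R, if 2 * rectSum μ (R.1 ∩ S) (R.2 ∩ D) * rectSum μ S T
          ≤ rectSum μ S D * rectSum μ (R.1 ∩ S) (R.2 ∩ T)
        then u R * (rectSum μ S D * rectSum μ (R.1 ∩ S) (R.2 ∩ T) / (10 * rectSum μ S T))
        else 0)
      ≤ rectPotential μ u S T := by
  simp only [rectPotential, ← Finset.sum_add_distrib]
  refine Finset.sum_le_sum fun R _ => ?_
  have hR : rectSum μ (R.1 ∩ S) (R.2 ∩ T)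
      = rectSum μ (R.1 ∩ S) (R.2 ∩ D) + rectSum μ (R.1 ∩ S) (R.2 ∩ (T \ D)) := by
    rw [rectSum_split_right μ (R.1 ∩ S) (Finset.inter_subset_inter_left hD),
      show (R.2 ∩ T) \ (R.2 ∩ D) = R.2 ∩ (T \ D) by grind]
  have hM := rectSum_split_right μ S hD
  have h := mul_le_mul_of_nonneg_left (mul_log_div_add_le
    (rectSum_nonneg hμ (R.1 ∩ S) (R.2 ∩ D)) (rectSum_nonneg hμ (R.1 ∩ S) (R.2 ∩ (T \ D)))
    (rectSum_mono hμ Finset.inter_subset_right Finset.inter_subset_right :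
      _ ≤ rectSum μ S D)
    (rectSum_mono hμ Finset.inter_subset_right Finset.inter_subset_right :
      _ ≤ rectSum μ S (T \ D))) (hu R)
  rw [← hR, ← hM] at h
  simpa only [mul_add, mul_ite, mul_zero] using h

/-- The potential is at most the logarithm of the total weight, up to an additive constant. -/
theorem rectPotential_univ_le {μ : X → Y → ℝ} (hμ : ∀ x y, 0 ≤ μ x y)
    (hμ1 : rectSum μ Finset.univ Finset.univ = 1) {u : Finset X × Finset Y → ℝ}
    (hu : ∀ R, 0 ≤ u R) {W : ℝ} (hW : 1 ≤ W) (huW : ∑ R, u R ≤ W)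
    (hcov : ∀ x y, rcov u x y ≤ 1) :
    rectPotential μ u Finset.univ Finset.univ ≤ Real.log W + 1 := by
  have hW0 : 0 < W := by linarith
  have hs : ∑ R : Finset X × Finset Y, u R * rectSum μ (R.1 ∩ Finset.univ) (R.2 ∩ Finset.univ)
      ≤ 1 := by
    rw [← rectSum_mul_rcov, ← hμ1]
    exact rectSum_le_rectSum fun x _ y _ => mul_le_of_le_one_right (hμ x y) (hcov x y)
  calc rectPotential μ u Finset.univ Finset.univ
      ≤ ∑ R : Finset X × Finset Y,
        (u R * rectSum μ (R.1 ∩ Finset.univ) (R.2 ∩ Finset.univ) * Real.log W + u R / W) := by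
        refine Finset.sum_le_sum fun R _ => ?_
        have h0 := rectSum_nonneg hμ (R.1 ∩ Finset.univ) (R.2 ∩ Finset.univ)
        have h := mul_log_div_le_tangent h0 zero_le_one (fun h => absurd h one_ne_zero)
          one_pos hW0
        rw [hμ1]
        have h' := mul_le_mul_of_nonneg_left h (hu R)
        rw [div_one] at h'
        have h3 := mul_nonneg (hu R) h0
        have h4 : u R * (1 * 1 / W) = u R / W := by ring
        nlinarith
    _ ≤ 1 * Real.log W + W / W := by
        rw [Finset.sum_add_distrib, ← Finset.sum_mul, ← Finset.sum_div]
        gcongr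
        exact Real.log_nonneg hW
    _ = _ := by rw [one_mul, div_self hW0.ne']

/-- A small drop `d - a - b` of the potential bounds the weight of the indices causing it. -/
theorem sum_ite_mul_lt_of_potential {ι : Type} [Fintype ι] {p : ι → Prop} {u r : ι → ℝ}
    {M M₁ a b d : ℝ}
    (hM : 0 < M) (hM₁ : 0 < M₁)
    (h : a + b + (∑ R, if p R then u R * (M₁ * r R / (10 * M)) else 0) ≤ d)
    (hd : d < a + b + 1 / 200 * M₁) :
    ∑ R, (if p R then u R * r R else 0) < M / 20 := by
  have e : (∑ R, if p R then u R * (M₁ * r R / (10 * M)) else 0)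
      = M₁ / (10 * M) * ∑ R, (if p R then u R * r R else 0) := by
    rw [Finset.mul_sum]
    refine Finset.sum_congr rfl fun R _ => ?_
    split_ifs
    · ring
    · simp
  have h1 : M₁ / (10 * M) * ∑ R, (if p R then u R * r R else 0) < M₁ / (10 * M) * (M / 20) := by
    have : M₁ / (10 * M) * (M / 20) = 1 / 200 * M₁ := by field_simp; norm_num
    linarith
  exact lt_of_mul_lt_mul_left h1 (by positivity)

/-- For a product distribution, a rectangle on which two nearly disjoint rectangle covers both have
constant mass has a good cut along a side of some rectangle of the second cover. -/
theorem hasGoodCut_of_covers {α : X → ℝ} {β : Y → ℝ} (hα : ∀ x, 0 ≤ α x) (hβ : ∀ y, 0 ≤ β y)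
    {u w : Finset X × Finset Y → ℝ} (hu : ∀ R, 0 ≤ u R) (hw : ∀ R, 0 ≤ w R) {W q δ : ℝ}
    (hW : ∑ R, w R ≤ W) (hq : 0 < q) (hqW : q * W ≤ 1 / 10) (hδ : δ ≤ 1 / 200)
    (huw : ∀ x y, rcov u x y * rcov w x y ≤ δ) {S : Finset X} {T : Finset Y}
    (hM : 0 < rectSum (fun x y => α x * β y) S T)
    (hcu : 3 / 10 * rectSum (fun x y => α x * β y) S T
      < rectSum (fun x y => α x * β y * rcov u x y) S T)
    (hcw : 3 / 10 * rectSum (fun x y => α x * β y) S T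
      < rectSum (fun x y => α x * β y * rcov w x y) S T) :
    HasGoodCut (fun x y => α x * β y) (rectPotential (fun x y => α x * β y) u) (1 / 200) q
      S T := by
  have hμ : ∀ x y, 0 ≤ α x * β y := fun x y => mul_nonneg (hα x) (hβ y)
  by_contra hno
  rw [HasGoodCut, not_or] at hno
  obtain ⟨hnoA, hnoB⟩ := hno
  push Not at hnoA hnoB
  set μ : X → Y → ℝ := fun x y => α x * β y with hμdef
  set M := rectSum μ S T with hMdef
  let m : Finset X × Finset Y → ℝ := fun R => rectSum μ (R.1 ∩ S) (R.2 ∩ T)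
  let I : Finset X × Finset Y → Finset X × Finset Y → ℝ := fun Q R =>
    rectSum μ (R.1 ∩ (Q.1 ∩ S)) (R.2 ∩ (Q.2 ∩ T))
  have hm : ∀ R, 0 ≤ m R := fun R => rectSum_nonneg hμ _ _
  have hI : ∀ Q R, 0 ≤ I Q R := fun Q R => rectSum_nonneg hμ _ _
  have hsu : 3 / 10 * M < ∑ R, u R * m R := by
    rwa [← rectSum_mul_rcov]
  have hsw : 3 / 10 * M < ∑ R, w R * m R := by
    rwa [← rectSum_mul_rcov]
  have hprod : ∑ Q, w Q * ∑ R, u R * I Q R ≤ δ * M := by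
    have h1 : rectSum (fun x y => μ x y * rcov u x y * rcov w x y) S T ≤ δ * M := by
      rw [hMdef, ← rectSum_const_mul]
      refine rectSum_le_rectSum fun x _ y _ => ?_
      rw [mul_assoc, mul_comm δ]
      exact mul_le_mul_of_nonneg_left (huw x y) (hμ x y)
    rw [rectSum_mul_rcov (fun x y => μ x y * rcov u x y)] at h1
    simpa only [rectSum_mul_rcov] using h1
  have key : ∀ Q, m Q ≤ q * M + 20 * ∑ R, u R * I Q R := by
    intro Q
    have hS : 0 ≤ ∑ R, u R * I Q R :=
      Finset.sum_nonneg fun R _ => mul_nonneg (hu R) (hI Q R)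
    by_cases hbig : m Q ≤ q * M
    · linarith
    push Not at hbig
    have hqM : 0 < q * M := mul_pos hq hM
    have hMA : m Q ≤ rectSum μ (Q.1 ∩ S) T :=
      rectSum_mono hμ subset_rfl Finset.inter_subset_right
    have hMB : m Q ≤ rectSum μ S (Q.2 ∩ T) :=
      rectSum_mono hμ Finset.inter_subset_right subset_rfl
    have hA := sum_ite_mul_lt_of_potential hM (by linarith)
      (rectPotential_split_left hμ hu (Finset.inter_subset_right (s₁ := Q.1) (s₂ := S)) T)
      (hnoA _ Finset.inter_subset_right (by linarith))
    have hB := sum_ite_mul_lt_of_potential hM (by linarith)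
      (rectPotential_split_right hμ hu S (Finset.inter_subset_right (s₁ := Q.2) (s₂ := T)))
      (hnoB _ Finset.inter_subset_right (by linarith))
    have hpt : (∑ R, u R * m R) * m Q ≤
        (∑ R : Finset X × Finset Y, if 2 * rectSum μ (R.1 ∩ (Q.1 ∩ S)) (R.2 ∩ T) * M
          ≤ rectSum μ (Q.1 ∩ S) T * rectSum μ (R.1 ∩ S) (R.2 ∩ T)
          then u R * rectSum μ (R.1 ∩ S) (R.2 ∩ T) else 0) * m Q +
        (∑ R : Finset X × Finset Y, if 2 * rectSum μ (R.1 ∩ S) (R.2 ∩ (Q.2 ∩ T)) * M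
          ≤ rectSum μ S (Q.2 ∩ T) * rectSum μ (R.1 ∩ S) (R.2 ∩ T)
          then u R * rectSum μ (R.1 ∩ S) (R.2 ∩ T) else 0) * m Q +
        4 * M * ∑ R, u R * I Q R := by
      simp only [Finset.sum_mul, Finset.mul_sum, ← Finset.sum_add_distrib]
      refine Finset.sum_le_sum fun R _ => ?_
      have huR := hu R
      have h0 := hm R
      have hQ := hm Q
      have h1 : 0 ≤ u R * m R * m Q := by positivity
      have h2 : 0 ≤ 4 * M * (u R * I Q R) := by have := hI Q R; positivity
      change _ ≤ (if _ then u R * m R else 0) * m Q + (if _ then u R * m R else 0) * m Q + _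
      split_ifs with hr hc hc
      · linarith
      · linarith
      · linarith
      · push Not at hr hc
        rw [zero_mul, zero_add, zero_add]
        have h3 := mul_le_mul hr.le hc.le
          (mul_nonneg (rectSum_nonneg hμ _ _) (rectSum_nonneg hμ _ _))
          (by have := rectSum_nonneg hμ (R.1 ∩ (Q.1 ∩ S)) (R.2 ∩ T); positivity)
        have h4 : M * m R * (m Q * m R) ≤ M * m R * (4 * M * I Q R) := by
          have e1 : M * m R * (m Q * m R)
              = rectSum μ (Q.1 ∩ S) T * rectSum μ (R.1 ∩ S) (R.2 ∩ T)
                * (rectSum μ S (Q.2 ∩ T) * rectSum μ (R.1 ∩ S) (R.2 ∩ T)) := by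
            simp only [m, hMdef, hμdef, rectSum_mul]; ring
          have e2 : M * m R * (4 * M * I Q R)
              = 2 * rectSum μ (R.1 ∩ (Q.1 ∩ S)) (R.2 ∩ T) * M
                * (2 * rectSum μ (R.1 ∩ S) (R.2 ∩ (Q.2 ∩ T)) * M) := by
            simp only [m, I, hMdef, hμdef, rectSum_mul]; ring
          rw [e1, e2]; exact h3
        rcases h0.eq_or_lt with hz | hpos
        · rw [← hz]; simpa using h2
        · have h5 := le_of_mul_le_mul_left h4 (mul_pos hM hpos)
          have h6 := mul_le_mul_of_nonneg_left h5 huR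
          linarith
    have hQ : 0 < m Q := hqM.trans hbig
    have hA' := mul_le_mul_of_nonneg_right hA.le hQ.le
    have hB' := mul_le_mul_of_nonneg_right hB.le hQ.le
    have hsu' := mul_le_mul_of_nonneg_right hsu.le hQ.le
    have hfin : M * m Q ≤ M * (20 * ∑ R, u R * I Q R) := by linarith
    have := le_of_mul_le_mul_left hfin hM
    linarith
  have hsum : ∑ Q, w Q * m Q ≤ (∑ Q, w Q) * (q * M) + 20 * ∑ Q, w Q * ∑ R, u R * I Q R := by
    rw [Finset.sum_mul, Finset.mul_sum, ← Finset.sum_add_distrib]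
    refine Finset.sum_le_sum fun Q _ => ?_
    have := mul_le_mul_of_nonneg_left (key Q) (hw Q)
    linarith
  have h1 : (∑ Q, w Q) * (q * M) ≤ 1 / 10 * M := by
    have := mul_le_mul_of_nonneg_right hW (mul_pos hq hM).le
    have := mul_le_mul_of_nonneg_right hqW hM.le
    linarith
  have h2 := mul_le_mul_of_nonneg_right hδ hM.le
  linarith

end Potential

/-! ## From the smooth rectangle bound to protocols -/

section SmoothRectangle

variable {X Y : Type} [Fintype X] [Fintype Y]

/-- The rectangle weights `w` are feasible for the linear program defining `srecZmu`. -/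
def IsSmoothCover (μ : X → Y → ℝ) (f : X → Y → Bool) (z : Bool) (ε δ : ℝ)
    (w : Finset X × Finset Y → ℝ) : Prop :=
  (∀ R, 0 ≤ w R) ∧
  ((1 - ε) * totalZ μ f z ≤ ∑ x, ∑ y, if f x y = z then μ x y * rcov w x y else 0) ∧
  (∀ x y, f x y ≠ z → rcov w x y ≤ δ) ∧
  (∀ x y, rcov w x y ≤ 1)

theorem exists_rcov_eq_indicator (f : X → Y → Bool) (z : Bool) :
    ∃ w : Finset X × Finset Y → ℝ, (∀ R, 0 ≤ w R) ∧
      ∀ x y, rcov w x y = if f x y = z then 1 else 0 := by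
  let r : X → Finset X × Finset Y := fun x => ({x}, Finset.univ.filter fun y => f x y = z)
  refine ⟨fun R => ∑ x, if R = r x then 1 else 0,
    fun R => Finset.sum_nonneg fun x _ => by split_ifs <;> norm_num, fun x y => ?_⟩
  have h : ∀ R : Finset X × Finset Y,
      (if x ∈ R.1 ∧ y ∈ R.2 then ∑ x', (if R = r x' then (1 : ℝ) else 0) else 0)
        = ∑ x', if R = r x' then (if x ∈ (r x').1 ∧ y ∈ (r x').2 then 1 else 0) else 0 := by
    intro R
    split_ifs with hR
    · refine Finset.sum_congr rfl fun x' _ => ?_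
      split_ifs with h1 h2
      · rfl
      · exact absurd (h1 ▸ hR) h2
      · rfl
    · refine (Finset.sum_eq_zero fun x' _ => ?_).symm
      split_ifs with h1 h2
      · exact absurd (h1 ▸ h2) hR
      · rfl
      · rfl
  rw [rcov, Finset.sum_congr rfl fun R _ => h R, Finset.sum_comm]
  simp only [Finset.sum_ite_eq', Finset.mem_univ, if_true]
  rw [Finset.sum_eq_single x]
  · simp [r]
  · intro x' _ hx'
    simp [r, hx'.symm]
  · simp

theorem exists_isSmoothCover_of_srecZmu_lt {μ : X → Y → ℝ} (hμ : ∀ x y, 0 ≤ μ x y)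
    {f : X → Y → Bool} {z : Bool} {ε δ V : ℝ} (hε : 0 ≤ ε) (hδ : 0 ≤ δ)
    (h : srecZmu μ f z ε δ < V) : ∃ w, IsSmoothCover μ f z ε δ w ∧ ∑ R, w R ≤ V := by
  have hne : {v : ℝ | ∃ w : Finset X × Finset Y → ℝ,
    (∀ R, 0 ≤ w R) ∧
    ((1 - ε) * totalZ μ f z ≤ ∑ x, ∑ y, if f x y = z then μ x y * rcov w x y else 0) ∧
    (∀ x y, f x y ≠ z → rcov w x y ≤ δ) ∧
    (∀ x y, rcov w x y ≤ 1) ∧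
    v = ∑ R : Finset X × Finset Y, w R}.Nonempty := by
    obtain ⟨w, hw, hcov⟩ := exists_rcov_eq_indicator f z
    refine ⟨_, w, hw, ?_, fun x y hxy => ?_, fun x y => ?_, rfl⟩
    · have e : (∑ x, ∑ y, if f x y = z then μ x y * rcov w x y else 0) = totalZ μ f z := by
        refine Finset.sum_congr rfl fun x _ => Finset.sum_congr rfl fun y _ => ?_
        rw [hcov]; split_ifs <;> simp
      have h0 : 0 ≤ totalZ μ f z :=
        Finset.sum_nonneg fun x _ => Finset.sum_nonneg fun y _ => by
          split_ifs
          exacts [hμ x y, le_rfl]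
      rw [e]; nlinarith
    · rw [hcov, if_neg hxy]; exact hδ
    · rw [hcov]; split_ifs <;> norm_num
  obtain ⟨v, ⟨w, h1, h2, h3, h4, rfl⟩, hv⟩ := exists_lt_of_csInf_lt hne h
  exact ⟨w, ⟨h1, h2, h3, h4⟩, hv.le⟩

/-- The mass that two smooth covers fail to cover is at most `ε`. -/
theorem rectSum_uncovered_le {μ : X → Y → ℝ} (hμ1 : rectSum μ Finset.univ Finset.univ = 1)
    {f : X → Y → Bool} {ε δ : ℝ} {w : Bool → Finset X × Finset Y → ℝ}
    (hw : ∀ z, IsSmoothCover μ f z ε δ (w z)) :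
    rectSum (fun x y => μ x y * (1 - rcov (w (f x y)) x y)) Finset.univ Finset.univ ≤ ε := by
  have e1 : rectSum (fun x y => μ x y * rcov (w (f x y)) x y) Finset.univ Finset.univ
      = (∑ x, ∑ y, if f x y = false then μ x y * rcov (w false) x y else 0)
        + ∑ x, ∑ y, if f x y = true then μ x y * rcov (w true) x y else 0 := by
    simp only [rectSum, ← Finset.sum_add_distrib]
    refine Finset.sum_congr rfl fun x _ => Finset.sum_congr rfl fun y _ => ?_
    cases f x y <;> simp
  have e2 : totalZ μ f false + totalZ μ f true = 1 := by
    rw [← hμ1]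
    simp only [totalZ, rectSum, ← Finset.sum_add_distrib]
    refine Finset.sum_congr rfl fun x _ => Finset.sum_congr rfl fun y _ => ?_
    cases f x y <;> simp
  have h0 := (hw false).2.1
  have h1 := (hw true).2.1
  simp only [mul_sub, mul_one, rectSum_sub, hμ1]
  rw [e1]
  have : (1 - ε) * (totalZ μ f false + totalZ μ f true) = 1 - ε := by rw [e2, mul_one]
  linarith

/-- Two smooth covers of total weight at most `2 ^ k` give a protocol with `O(k ^ 2)` bits. -/
theorem exists_protocol_of_smoothCovers {α : X → ℝ} {β : Y → ℝ} (hα : IsDist α) (hβ : IsDist β)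
    {f : X → Y → Bool} {δ : ℝ} (hδ : δ ≤ 1 / 200) {w : Bool → Finset X × Finset Y → ℝ}
    (hw : ∀ z, IsSmoothCover (fun x y => α x * β y) f z δ δ (w z)) {k : ℕ} (hk : 20 ≤ k)
    (hwk : ∀ z, ∑ R, w z R ≤ 2 ^ k) :
    ∃ P : Protocol X Y, P.depth ≤ 80000 * k ^ 2 ∧
      commErr (fun x y => α x * β y) f P ≤ 0.49 := by
  set μ : X → Y → ℝ := fun x y => α x * β y with hμdef
  have hμ : ∀ x y, 0 ≤ μ x y := fun x y => mul_nonneg (hα.1 x) (hβ.1 y)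
  have hμ1 : rectSum μ Finset.univ Finset.univ = 1 := by
    rw [hμdef, rectSum_mul, hα.2, hβ.2, one_mul]
  have hcov0 : ∀ z x y, 0 ≤ rcov (w z) x y := fun z x y =>
    Finset.sum_nonneg fun R _ => by
      split_ifs
      exacts [(hw z).1 R, le_rfl]
  have hcov1 : ∀ z x y, rcov (w z) x y ≤ 1 := fun z => (hw z).2.2.2
  have hcovprod : ∀ x y, rcov (w false) x y * rcov (w true) x y ≤ δ := by
    intro x y
    cases hf : f x y
    · exact (mul_le_of_le_one_left (hcov0 _ x y) (hcov1 _ x y)).trans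
        ((hw true).2.2.1 x y (by simp [hf]))
    · exact (mul_le_of_le_one_right (hcov0 _ x y) (hcov1 _ x y)).trans
        ((hw false).2.2.1 x y (by simp [hf]))
  let r : X → Y → ℝ := fun x y => μ x y * (1 - rcov (w (f x y)) x y)
  have hr : ∀ x y, 0 ≤ r x y := fun x y => mul_nonneg (hμ x y) (sub_nonneg.2 (hcov1 _ x y))
  let e : X → Y → ℝ := fun x y => 3 / 10 * μ x y + r x y
  have he : ∀ x y, 0 ≤ e x y := fun x y => by
    have := hμ x y
    have := hr x y
    positivity
  have heS : ∀ S T, rectSum e S T = 3 / 10 * rectSum μ S T + rectSum r S T := fun S T => by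
    rw [rectSum_add, rectSum_const_mul]
  have hkR : (20 : ℝ) ≤ k := by exact_mod_cast hk
  have hpow : (160000 : ℝ) * k ≤ 2 ^ (2 * k) := by
    have h1 : (k : ℝ) ≤ 2 ^ k := by exact_mod_cast (Nat.lt_two_pow_self (n := k)).le
    have h2 : (2 : ℝ) ^ 20 ≤ 2 ^ k := pow_le_pow_right₀ (by norm_num) hk
    rw [two_mul, pow_add]
    nlinarith
  have hk10 : (10 : ℝ) ≤ 2 ^ k := by
    have h2 : (2 : ℝ) ^ 20 ≤ 2 ^ k := pow_le_pow_right₀ (by norm_num) hk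
    linarith
  set q : ℝ := 1 / 2 ^ (2 * k) with hq
  have hq0 : 0 < q := by positivity
  have hq1 : q ≤ 1 := (div_le_one (by positivity)).2 (by nlinarith)
  have hqW : q * 2 ^ k ≤ 1 / 10 := by
    have : q * 2 ^ k = 1 / 2 ^ k := by
      rw [hq, two_mul, pow_add]; field_simp
    rw [this]
    exact one_div_le_one_div_of_le (by norm_num) hk10
  have hcut : ∀ S T, (∃ b, rectSum (errFun μ f fun _ _ => b) S T ≤ rectSum e S T) ∨
      HasGoodCut μ (rectPotential μ (w false)) (1 / 200) q S T := by
    intro S T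
    by_cases hb : ∃ b, rectSum (errFun μ f fun _ _ => b) S T ≤ rectSum e S T
    · exact Or.inl hb
    right
    push Not at hb
    have hM : 0 < rectSum μ S T :=
      ((rectSum_nonneg he S T).trans_lt (hb true)).trans_le
        (rectSum_le_rectSum fun x _ y _ => errFun_le hμ f _ x y)
    have hcover : ∀ b, 3 / 10 * rectSum μ S T
        < rectSum (fun x y => μ x y * rcov (w (!b)) x y) S T := by
      intro b
      have h1 : rectSum (errFun μ f fun _ _ => b) S T
          ≤ rectSum (fun x y => μ x y * rcov (w (!b)) x y) S T + rectSum r S T := by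
        rw [← rectSum_add]
        refine rectSum_le_rectSum fun x _ y _ => ?_
        have h2 := hr x y
        have h3 := mul_nonneg (hμ x y) (hcov0 (!b) x y)
        by_cases hf : b = f x y
        · simp only [errFun, hf, ne_eq, not_true_eq_false, if_false]
          rw [hf] at h3
          positivity
        · have hf' : f x y = !b := by revert hf; cases b <;> cases f x y <;> simp
          rw [errFun, if_pos hf]
          simp only [r, hf']
          linarith
      have := hb b
      rw [heS] at this
      linarith
    exact hasGoodCut_of_covers hα.1 hβ.1 (hw false).1 (hw true).1 (hwk true) hq0 hqW hδ hcovprod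
      hM (hcover true) (hcover false)
  obtain ⟨P, U, hd, hU, -, hKU, hE⟩ := exists_protocol_of_goodCut hμ he
    (rectPotential_nonneg hμ (hw false).1) (by norm_num) hq1 hcut
    (N := 2 ^ (4 * k)) (m := 4 * k + 1) (Nat.pow_lt_pow_right (by norm_num) (by omega))
    (8000 * k) Finset.univ Finset.univ
  refine ⟨P, ?_, ?_⟩
  · refine hd.trans ?_
    nlinarith
  have hΦ := rectPotential_univ_le hμ hμ1 (hw false).1 (one_le_pow₀ one_le_two) (hwk false)
    (hcov1 false)
  have hlog : Real.log ((2 : ℝ) ^ k) ≤ k := by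
    rw [Real.log_pow]
    have := Real.log_two_lt_d9
    nlinarith
  have hτ : (1 - q) ^ (2 ^ (4 * k)) * 2 ^ (2 * k) ≤ 1 := by
    have h1 : (2 : ℝ) ^ (2 * k) ≤ (1 + q) ^ (2 ^ (4 * k)) := by
      have h := one_add_mul_le_pow (show -2 ≤ q by linarith) (2 ^ (4 * k))
      have h2 : ((2 ^ (4 * k) : ℕ) : ℝ) * q = 2 ^ (2 * k) := by
        rw [hq, show 4 * k = 2 * k + 2 * k by ring]; push_cast; rw [pow_add]; field_simp
      linarith
    have h0 : 0 ≤ (1 - q) ^ (2 ^ (4 * k)) := pow_nonneg (by linarith) _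
    calc (1 - q) ^ (2 ^ (4 * k)) * 2 ^ (2 * k)
        ≤ (1 - q) ^ (2 ^ (4 * k)) * (1 + q) ^ (2 ^ (4 * k)) := by gcongr
      _ = (1 - q ^ 2) ^ (2 ^ (4 * k)) := by rw [← mul_pow]; ring
      _ ≤ 1 := pow_le_one₀ (by nlinarith) (by nlinarith)
  have hUle : U ≤ 1 / 10 := by
    rw [hμ1, mul_one] at hKU
    push_cast at hKU
    have h0 : 0 ≤ (1 - q) ^ (2 ^ (4 * k)) := pow_nonneg (by linarith) _
    have h1 : 160000 * (k : ℝ) * (1 - q) ^ (2 ^ (4 * k)) ≤ 1 := by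
      have := mul_le_mul_of_nonneg_left hpow h0
      linarith
    have h2 : (k : ℝ) * (160000 * (k : ℝ) * (1 - q) ^ (2 ^ (4 * k))) ≤ k * 1 := by gcongr
    have h3 : (40 * k : ℝ) * U ≤ (40 * k) * (1 / 10) := by nlinarith
    exact le_of_mul_le_mul_left h3 (by positivity)
  have hrtot : rectSum r Finset.univ Finset.univ ≤ δ := rectSum_uncovered_le hμ1 hw
  rw [heS, hμ1] at hE
  calc commErr μ f P = rectSum (errFun μ f P.eval) Finset.univ Finset.univ := rfl
    _ ≤ 0.49 := by norm_num; linarith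

end SmoothRectangle

end

/-- **Theorem 2.2, part 2.** There is a universal constant `C > 0` such that for every `n`,
every `f : {0,1}ⁿ × {0,1}ⁿ → {0,1}`, every product distribution `μ`, and every integer
`k ≥ 20` with `⌈100 · log srec^μ_{δ,δ}(f)⌉ ≤ k` for `δ = 1/(30·100·(k+1)⁴)`, we have
`CC^μ_{0.49}(f) ≤ C · k²`. -/
theorem cc_le_k_sq :
    ∃ C : ℝ, 0 < C ∧
      ∀ (n : ℕ) (f : (Fin n → Bool) → (Fin n → Bool) → Bool)
        (μA μB : (Fin n → Bool) → ℝ), IsDist μA → IsDist μB →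
        ∀ k : ℕ, 20 ≤ k →
        ⌈(100 : ℝ) * Real.logb 2 (srecMu (fun x y => μA x * μB y) f
            (1 / (30 * 100 * ((k : ℝ) + 1) ^ 4)) (1 / (30 * 100 * ((k : ℝ) + 1) ^ 4)))⌉
          ≤ (k : ℤ) →
        (CCdist (fun x y => μA x * μB y) f 0.49 : ℝ) ≤ C * (k : ℝ) ^ 2 := by
  refine ⟨80000, by norm_num, fun n f μA μB hA hB k hk hs => ?_⟩
  set δ : ℝ := 1 / (30 * 100 * ((k : ℝ) + 1) ^ 4) with hδ
  have hδ0 : 0 ≤ δ := by positivity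
  have hδ1 : δ ≤ 1 / 200 := by
    refine one_div_le_one_div_of_le (by norm_num) ?_
    have : (1 : ℝ) ≤ ((k : ℝ) + 1) ^ 4 := one_le_pow₀ (by have := k.cast_nonneg (α := ℝ); linarith)
    linarith
  have hμ : ∀ x y, 0 ≤ μA x * μB y := fun x y => mul_nonneg (hA.1 x) (hB.1 y)
  have hsrec : srecMu (fun x y => μA x * μB y) f δ δ < 2 ^ k := by
    have h1 := (Int.le_ceil _).trans (Int.cast_le (R := ℝ).2 hs)
    push_cast at h1
    have hk0 : (20 : ℝ) ≤ k := by exact_mod_cast hk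
    by_contra! hle
    have h2 := Real.logb_le_logb_of_le one_lt_two (by positivity) hle
    rw [Real.logb_pow, Real.logb_self_eq_one one_lt_two] at h2
    linarith
  have hcover : ∀ z, ∃ w, IsSmoothCover (fun x y => μA x * μB y) f z δ δ w ∧
      ∑ R, w R ≤ 2 ^ k := by
    intro z
    refine exists_isSmoothCover_of_srecZmu_lt hμ hδ0 hδ0 (lt_of_le_of_lt ?_ hsrec)
    cases z
    exacts [le_max_left _ _, le_max_right _ _]
  choose w hw hwk using hcover
  obtain ⟨P, hP, hE⟩ := exists_protocol_of_smoothCovers hA hB hδ1 hw hk hwk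
  have : CCdist (fun x y => μA x * μB y) f 0.49 ≤ 80000 * k ^ 2 := Nat.sInf_le ⟨P, hP, hE⟩
  exact_mod_cast this
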